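/- Let I be a matching of a (2×2)-type generic partitioned matrix A and let Ã_I be its canonical substitution (x_{αβ} ↦ 1 on I, 0 off I). Define ker_I(α) := F² if deg_I(α) = 0; ker_I(α) := ker_L(A_{αβ}) if α is incident to exactly one edge αβ of I and that edge has rank 1; and ker_I(α) := {0} otherwise. Then the left kernel of Ã_I equals ⊕_α ker_I(α) (and symmetrically the right kernel equals ⊕_β ker_I(β), with ker_R in place of ker_L). -/

import Mathlib

open Matrix

/-- The `(2 × 2)`-type generic partitioned matrix with blocks `A_{αβ} x_{αβ}`,
restricted to blocks in `J`, over the rational function field `F(x)`. -/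
noncomputable def genPartMat {F : Type*} [Field F] {μ ν : ℕ}
    (A : Fin μ → Fin ν → Matrix (Fin 2) (Fin 2) F) (J : Finset (Fin μ × Fin ν)) :
    Matrix (Fin μ × Fin 2) (Fin ν × Fin 2)
      (FractionRing (MvPolynomial (Fin μ × Fin ν) F)) :=
  Matrix.of fun p q =>
    if (p.1, q.1) ∈ J then
      algebraMap (MvPolynomial (Fin μ × Fin ν) F) _
        (MvPolynomial.C (A p.1 q.1 p.2 q.2) * MvPolynomial.X (p.1, q.1))
    else 0

/-- The canonical substitution `Ã_I` of `A_I` (`x_{αβ} ↦ 1` on `I`, `0` off `I`). -/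
def canonSubst {F : Type*} [Field F] {μ ν : ℕ}
    (A : Fin μ → Fin ν → Matrix (Fin 2) (Fin 2) F) (I : Finset (Fin μ × Fin ν)) :
    Matrix (Fin μ × Fin 2) (Fin ν × Fin 2) F :=
  Matrix.of fun p q => if (p.1, q.1) ∈ I then A p.1 q.1 p.2 q.2 else 0

open scoped Classical in
/-- `ker_I(α) ⊆ F²`: all of `F²` if `deg_I(α) = 0`; the left kernel of `A_{αβ}` if `α`
is incident to exactly one edge `αβ` of `I` and that edge is rank-1; `{0}` otherwise. -/
noncomputable def kerIL {F : Type*} [Field F] {μ ν : ℕ}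
    (A : Fin μ → Fin ν → Matrix (Fin 2) (Fin 2) F) (I : Finset (Fin μ × Fin ν))
    (α : Fin μ) : Submodule F (Fin 2 → F) :=
  if (I.filter fun e => e.1 = α).card = 0 then ⊤
  else if h : ∃ β, (I.filter fun e => e.1 = α) = {(α, β)} ∧ (A α β).rank = 1 then
    LinearMap.ker (A α h.choose).vecMulLinear
  else ⊥

open scoped Classical in
/-- `ker_I(β) ⊆ F²`: all of `F²` if `deg_I(β) = 0`; the right kernel of `A_{αβ}` if `β`
is incident to exactly one edge `αβ` of `I` and that edge is rank-1; `{0}` otherwise. -/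
noncomputable def kerIR {F : Type*} [Field F] {μ ν : ℕ}
    (A : Fin μ → Fin ν → Matrix (Fin 2) (Fin 2) F) (I : Finset (Fin μ × Fin ν))
    (β : Fin ν) : Submodule F (Fin 2 → F) :=
  if (I.filter fun e => e.2 = β).card = 0 then ⊤
  else if h : ∃ α, (I.filter fun e => e.2 = β) = {(α, β)} ∧ (A α β).rank = 1 then
    LinearMap.ker (A h.choose β).mulVecLin
  else ⊥

/-!
A monomial of a maximal minor of `A_I` contains every edge of `I`, since otherwise the minor would
survive the deletion of an edge and the rank would not drop. As a row block `α` has only two rows,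
this leaves a single monomial, so no cancellation occurs at `x = 1` and `Ã_I` has the rank of `A_I`.

Let `xᵀ Ã_I = 0`. If `x_α ≠ 0`, some maximal minor avoids a row of block `α`, and having at most one
row there it forces `deg_I(α) ≤ 1`. If moreover `u := x_αᵀ A_{αβ} ≠ 0` for an edge `αβ`, then
another edge `α'β` has `x_{α'} ≠ 0`, so `α` and `α'` both have degree one. Deleting `αβ` yields a
vector `y ∈ F²` with `A_{αβ} y ≠ 0 = A_{α'β} y`, deleting `α'β` yields `y' ∈ F²` with `A_{αβ} y' = 0
≠ A_{α'β} y'`, and `u` is orthogonal to the basis `y, y'`. The right kernel follows by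
transposition.
-/

section Rank

variable {K L m m' n : Type*} [Field K] [Field L]

lemma rank_le_rank_of_ker_le [Fintype n] (B : Matrix m n K) (C : Matrix m' n K)
    (h : ∀ y, C *ᵥ y = 0 → B *ᵥ y = 0) : B.rank ≤ C.rank := by
  have hker : LinearMap.ker C.mulVecLin ≤ LinearMap.ker B.mulVecLin := h
  have hB := LinearMap.finrank_range_add_finrank_ker B.mulVecLin
  have hC := LinearMap.finrank_range_add_finrank_ker C.mulVecLin
  have := Submodule.finrank_mono hker
  unfold Matrix.rank
  omega

lemma linearIndependent_row_iff_rank_eq_card [Fintype m] [Fintype n] (B : Matrix m n K) :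
    LinearIndependent K B.row ↔ B.rank = Fintype.card m := by
  rw [linearIndependent_iff_card_eq_finrank_span, rank_eq_finrank_span_row, Set.finrank, eq_comm]

lemma eq_zero_of_rank_eq_zero [Finite m] [Fintype n] {B : Matrix m n K} (hB : B.rank = 0) :
    B = 0 := by
  rw [rank_eq_finrank_span_row, Submodule.finrank_eq_zero, Submodule.span_eq_bot] at hB
  exact funext fun i => hB _ ⟨i, rfl⟩

lemma exists_linearIndependent_rows [Finite m] [Fintype n] (B : Matrix m n K) {r : ℕ}
    (hr : B.rank = r) : ∃ f : Fin r → m, LinearIndependent K (B.submatrix f id).row := by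
  subst hr
  rw [rank_eq_finrank_span_row]
  obtain ⟨v, hv, -, hli⟩ := Submodule.exists_fun_fin_finrank_span_eq K (Set.range B.row)
  choose f hf using hv
  have hfv : (B.submatrix f id).row = v := funext hf
  exact ⟨f, hfv ▸ hli⟩

lemma exists_det_submatrix_ne_zero [Finite m] [Fintype n] (B : Matrix m n K) {r : ℕ}
    (hr : B.rank = r) : ∃ (f : Fin r → m) (g : Fin r → n), (B.submatrix f g).det ≠ 0 := by
  obtain ⟨f, hf⟩ := exists_linearIndependent_rows B hr
  have hrank : (B.submatrix f id)ᵀ.rank = r := by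
    simpa only [rank_transpose, Fintype.card_fin] using hf.rank_matrix
  obtain ⟨g, hg⟩ := exists_linearIndependent_rows _ hrank
  rw [linearIndependent_rows_iff_isUnit, isUnit_iff_isUnit_det, ← transpose_submatrix,
    det_transpose] at hg
  exact ⟨f, g, hg.ne_zero⟩

lemma card_le_rank_of_det_submatrix_ne_zero {ι : Type*} [Fintype ι] [DecidableEq ι] [Fintype n]
    (B : Matrix m n K) {f : ι → m} {g : ι → n} (h : (B.submatrix f g).det ≠ 0) :
    Fintype.card ι ≤ B.rank :=
  rank_of_det_ne_zero h ▸ rank_submatrix_le B f g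

lemma rank_le_rank_of_minors [Finite m] [Fintype n] (B : Matrix m n K) (C : Matrix m n L)
    (h : ∀ (f : Fin B.rank → m) (g : Fin B.rank → n),
      (B.submatrix f g).det ≠ 0 → (C.submatrix f g).det ≠ 0) : B.rank ≤ C.rank := by
  obtain ⟨f, g, hfg⟩ := exists_det_submatrix_ne_zero B rfl
  simpa only [Fintype.card_fin] using card_le_rank_of_det_submatrix_ne_zero C (h f g hfg)

lemma rank_map_ringHom [Finite m] [Fintype n] (φ : K →+* L) (B : Matrix m n K) :
    (B.map φ).rank = B.rank := by
  have hdet {r : ℕ} (f : Fin r → m) (g : Fin r → n) :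
      ((B.map φ).submatrix f g).det ≠ 0 ↔ (B.submatrix f g).det ≠ 0 := by
    rw [← map_ne_zero φ, φ.map_det]
    rfl
  exact le_antisymm (rank_le_rank_of_minors _ _ fun f g => (hdet f g).1)
    (rank_le_rank_of_minors _ _ fun f g => (hdet f g).2)

lemma exists_det_submatrix_ne_zero_avoiding [Fintype m] [Fintype n] (B : Matrix m n K) {r : ℕ}
    (hr : B.rank = r) {x : m → K} (hx : x ᵥ* B = 0) {p : m} (hp : x p ≠ 0) :
    ∃ (f : Fin r → m) (g : Fin r → n), (B.submatrix f g).det ≠ 0 ∧ ∀ i, f i ≠ p := by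
  classical
  let C := B.submatrix (Subtype.val : {q // q ≠ p} → m) id
  have hker (y : n → K) (hy : C *ᵥ y = 0) : B *ᵥ y = 0 := by
    have hq (q : m) (hqp : q ≠ p) : (B *ᵥ y) q = 0 := congrFun hy ⟨q, hqp⟩
    have hxBy : x ⬝ᵥ (B *ᵥ y) = 0 := by rw [dotProduct_mulVec, hx, zero_dotProduct]
    rw [dotProduct, Fintype.sum_eq_single p fun q hqp => by rw [hq q hqp, mul_zero]] at hxBy
    funext q
    obtain rfl | hqp := eq_or_ne q p
    exacts [(mul_eq_zero.1 hxBy).resolve_left hp, hq q hqp]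
  have hC : C.rank = r :=
    hr ▸ (rank_submatrix_le B Subtype.val id).antisymm (rank_le_rank_of_ker_le B C hker)
  obtain ⟨f, g, hfg⟩ := exists_det_submatrix_ne_zero C hC
  exact ⟨fun i => f i, g, hfg, fun i => (f i).2⟩

lemma row_injective_of_det_submatrix_ne_zero {ι R : Type*} [Fintype ι] [DecidableEq ι]
    [CommRing R] {B : Matrix m n R} {f : ι → m} {g : ι → n} (h : (B.submatrix f g).det ≠ 0) :
    Function.Injective f := by
  intro i j hij
  by_contra hne
  exact h (det_zero_of_row_eq hne (funext fun k => congrArg (B · (g k)) hij))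

lemma eq_zero_of_dotProduct_eq_zero [Fintype n] {v : n → n → K} (hv : LinearIndependent K v)
    {u : n → K} (hu : ∀ i, v i ⬝ᵥ u = 0) : u = 0 := by
  classical
  have hunit : IsUnit (Matrix.of v) := linearIndependent_rows_iff_isUnit.1 hv
  exact (mulVec_injective_iff_isUnit.2 hunit) ((funext hu).trans (mulVec_zero _).symm)

end Rank

section Counting

lemma eq_of_sum_eq_of_sum_le_two {ι : Type*} [Fintype ι] {s t : ι → ℕ}
    (hsupp : ∀ i, s i ≠ 0 ↔ t i ≠ 0) (hsum : ∑ i, s i = ∑ i, t i) (hle : ∑ i, s i ≤ 2) :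
    s = t := by
  classical
  have hpair (u : ι → ℕ) {i j : ι} (hij : j ≠ i) : u i + u j ≤ ∑ k, u k := by
    rw [← Finset.sum_pair hij.symm]
    exact Finset.sum_le_sum_of_subset (Finset.subset_univ _)
  funext i
  have hi := hsupp i
  by_cases hother : ∃ j ≠ i, s j ≠ 0
  · obtain ⟨j, hji, hj⟩ := hother
    have hs := hpair s hji
    have ht := hpair t hji
    have htj := (hsupp j).1 hj
    omega
  · push Not at hother
    have hother' (j : ι) (hji : j ≠ i) : t j = 0 :=
      of_not_not fun hj => (hsupp j).2 hj (hother j hji)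
    rwa [Fintype.sum_eq_single i hother, Fintype.sum_eq_single i hother'] at hsum

lemma card_fiber_fst_le {ι V κ : Type*} [Fintype ι] [DecidableEq V] {f : ι → V × κ}
    (hf : Function.Injective f) {v : V} {T : Finset κ} (hT : ∀ i, (f i).1 = v → (f i).2 ∈ T) :
    (Finset.univ.filter fun i => (f i).1 = v).card ≤ T.card := by
  refine Finset.card_le_card_of_injOn (fun i => (f i).2) (fun i hi => hT i (by simpa using hi)) ?_
  intro i hi j hj hij
  simp only [Finset.coe_filter, Finset.mem_univ, true_and, Set.mem_ofPred_eq] at hi hj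
  exact hf (Prod.ext (hi.trans hj.symm) hij)

end Counting

section VariableMatrix

open MvPolynomial

variable {ι m n σ R V W : Type*} [CommRing R]

/-- The generic matrix whose `(i, j)` entry is `M i j` times the variable `X (c i j)`. The labelling
`c` says which entries share a variable; a generic partitioned matrix is the case where `c i j` is
the pair of blocks containing row `i` and column `j`. -/
noncomputable def variableMatrix (c : m → n → σ) (M : Matrix m n R) :
    Matrix m n (MvPolynomial σ R) :=
  Matrix.of fun i j => monomial (Finsupp.single (c i j) 1) (M i j)

variable [Fintype ι] [DecidableEq ι]

lemma coeff_det_variableMatrix [DecidableEq σ] (c : ι → ι → σ) (M : Matrix ι ι R) (s : σ →₀ ℕ) :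
    coeff s (variableMatrix c M).det =
      ∑ π : Equiv.Perm ι, if ∑ i, Finsupp.single (c (π i) i) 1 = s
        then π.sign • ∏ i, M (π i) i else 0 := by
  simp only [det_apply, variableMatrix, of_apply, ← monomial_sum_prod, coeff_sum, Units.smul_def,
    coeff_smul, coeff_monomial, smul_ite, smul_zero]

lemma exists_perm_of_coeff_det_variableMatrix_ne_zero {c : ι → ι → σ} {M : Matrix ι ι R}
    {s : σ →₀ ℕ} (hs : coeff s (variableMatrix c M).det ≠ 0) :
    ∃ π : Equiv.Perm ι, ∑ i, Finsupp.single (c (π i) i) 1 = s ∧ ∀ i, M (π i) i ≠ 0 := by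
  classical
  rw [coeff_det_variableMatrix] at hs
  obtain ⟨π, -, hπ⟩ := Finset.exists_ne_zero_of_sum_ne_zero hs
  have hsum := of_not_not fun h => hπ (if_neg h)
  refine ⟨π, hsum, fun i hi => hπ ?_⟩
  have hprod : ∏ j, M (π j) j = 0 := Finset.prod_eq_zero (Finset.mem_univ i) hi
  rw [if_pos hsum, hprod, smul_zero]

lemma coeff_det_variableMatrix_congr {c : ι → ι → σ} {M N : Matrix ι ι R} {s : σ →₀ ℕ}
    (h : ∀ i j, s (c i j) ≠ 0 → M i j = N i j) :
    coeff s (variableMatrix c M).det = coeff s (variableMatrix c N).det := by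
  classical
  simp only [coeff_det_variableMatrix]
  refine Finset.sum_congr rfl fun π _ => ?_
  split_ifs with hs
  · subst hs
    congr 1
    refine Finset.prod_congr rfl fun i _ => h _ _ ?_
    rw [Finsupp.finsetSum_apply]
    exact (Finset.sum_pos' (fun _ _ => Nat.zero_le _) ⟨i, Finset.mem_univ i, by simp⟩).ne'
  · rfl

lemma exists_entry_of_coeff_det_variableMatrix_ne_zero {c : ι → ι → σ} {M : Matrix ι ι R}
    {s : σ →₀ ℕ} (hs : coeff s (variableMatrix c M).det ≠ 0) {e : σ} (he : s e ≠ 0) :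
    ∃ i j, c i j = e ∧ M i j ≠ 0 := by
  obtain ⟨π, rfl, hπ⟩ := exists_perm_of_coeff_det_variableMatrix_ne_zero hs
  rw [Finsupp.finsetSum_apply] at he
  obtain ⟨i, -, hi⟩ := Finset.exists_ne_zero_of_sum_ne_zero he
  exact ⟨π i, i, of_not_not fun h => hi (Finsupp.single_eq_of_ne' h), hπ i⟩

lemma sum_eq_card_rows_of_coeff_det_variableMatrix_ne_zero [DecidableEq V] [Fintype W] {p : ι → V}
    {q : ι → W} {M : Matrix ι ι R} {s : V × W →₀ ℕ}
    (hs : coeff s (variableMatrix (fun i j => (p i, q j)) M).det ≠ 0) (v : V) :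
    ∑ w, s (v, w) = (Finset.univ.filter fun i => p i = v).card := by
  classical
  obtain ⟨π, rfl, -⟩ := exists_perm_of_coeff_det_variableMatrix_ne_zero hs
  rw [Finset.card_filter, ← Equiv.sum_comp π fun i => if p i = v then 1 else 0]
  simp only [Finsupp.finsetSum_apply]
  rw [Finset.sum_comm]
  refine Finset.sum_congr rfl fun i _ => ?_
  by_cases hi : p (π i) = v <;> simp [Finsupp.single_apply, hi]

lemma eval_one_det_variableMatrix (c : ι → ι → σ) (M : Matrix ι ι R) :
    eval 1 (variableMatrix c M).det = M.det := by
  rw [RingHom.map_det]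
  congr 1
  ext i j
  simp [variableMatrix, eval_monomial]

end VariableMatrix

section Matching

variable {F : Type*} [Field F] {μ ν r : ℕ} {A : Fin μ → Fin ν → Matrix (Fin 2) (Fin 2) F}
  {I J : Finset (Fin μ × Fin ν)}

/-- The generic partitioned matrix `A_J` over the polynomial ring rather than its fraction field, so
that its minors have coefficients. -/
noncomputable abbrev genPartPoly (A : Fin μ → Fin ν → Matrix (Fin 2) (Fin 2) F)
    (J : Finset (Fin μ × Fin ν)) :
    Matrix (Fin μ × Fin 2) (Fin ν × Fin 2) (MvPolynomial (Fin μ × Fin ν) F) :=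
  variableMatrix (fun p q => (p.1, q.1)) (canonSubst A J)

/-- `I` is a matching of the generic partitioned matrix with blocks `A`: its edges are nonzero
blocks, and deleting any of them lowers the rank of `A_I`. -/
structure IsMatching (A : Fin μ → Fin ν → Matrix (Fin 2) (Fin 2) F)
    (I : Finset (Fin μ × Fin ν)) : Prop where
  block_ne_zero : ∀ e ∈ I, A e.1 e.2 ≠ 0
  rank_erase_lt : ∀ e ∈ I, (genPartMat A (I.erase e)).rank < (genPartMat A I).rank

lemma map_genPartPoly (A : Fin μ → Fin ν → Matrix (Fin 2) (Fin 2) F)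
    (J : Finset (Fin μ × Fin ν)) :
    (genPartPoly A J).map (algebraMap _ (FractionRing (MvPolynomial (Fin μ × Fin ν) F))) =
      genPartMat A J := by
  ext p q
  by_cases h : (p.1, q.1) ∈ J <;>
    simp [genPartMat, genPartPoly, variableMatrix, canonSubst, h,
      ← MvPolynomial.C_mul_X_eq_monomial]

lemma det_submatrix_genPartMat_ne_zero_iff {f : Fin r → Fin μ × Fin 2}
    {g : Fin r → Fin ν × Fin 2} :
    ((genPartMat A J).submatrix f g).det ≠ 0 ↔ ((genPartPoly A J).submatrix f g).det ≠ 0 := by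
  rw [← map_genPartPoly, submatrix_map, ← RingHom.mapMatrix_apply, ← RingHom.map_det, ne_eq,
    FaithfulSMul.algebraMap_eq_zero_iff]

lemma det_submatrix_genPartPoly_ne_zero {f : Fin r → Fin μ × Fin 2} {g : Fin r → Fin ν × Fin 2}
    (h : ((canonSubst A J).submatrix f g).det ≠ 0) :
    ((genPartPoly A J).submatrix f g).det ≠ 0 := by
  intro h0
  have heval := eval_one_det_variableMatrix (fun i j => ((f i).1, (g j).1))
    ((canonSubst A J).submatrix f g)
  exact h (heval.symm.trans ((congrArg _ h0).trans (map_zero _)))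

lemma le_rank_genPartMat {f : Fin r → Fin μ × Fin 2} {g : Fin r → Fin ν × Fin 2}
    (h : ((genPartPoly A J).submatrix f g).det ≠ 0) : r ≤ (genPartMat A J).rank := by
  have hminor : ((genPartMat A J).submatrix f g).det ≠ 0 :=
    det_submatrix_genPartMat_ne_zero_iff.2 h
  simpa only [Fintype.card_fin] using card_le_rank_of_det_submatrix_ne_zero _ hminor

lemma rank_canonSubst_le : (canonSubst A J).rank ≤ (genPartMat A J).rank :=
  rank_le_rank_of_minors _ _ fun _ _ h =>
    det_submatrix_genPartMat_ne_zero_iff.2 (det_submatrix_genPartPoly_ne_zero h)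

namespace IsMatching

lemma coeff_support_iff (hI : IsMatching A I) (hr : (genPartMat A I).rank ≤ r)
    {f : Fin r → Fin μ × Fin 2} {g : Fin r → Fin ν × Fin 2} {s : Fin μ × Fin ν →₀ ℕ}
    (hs : ((genPartPoly A I).submatrix f g).det.coeff s ≠ 0) (e : Fin μ × Fin ν) :
    s e ≠ 0 ↔ e ∈ I := by
  constructor
  · intro he
    obtain ⟨i, j, rfl, hij⟩ := exists_entry_of_coeff_det_variableMatrix_ne_zero hs he
    exact of_not_not fun h => hij (if_neg h)
  · intro heI he
    have hcoeff : ((genPartPoly A (I.erase e)).submatrix f g).det.coeff s =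
        ((genPartPoly A I).submatrix f g).det.coeff s := by
      refine coeff_det_variableMatrix_congr fun i j hij => ?_
      have hne : ((f i).1, (g j).1) ≠ e := fun h => hij ((congrArg s h).trans he)
      simp [canonSubst, hne]
    have hdet : ((genPartPoly A (I.erase e)).submatrix f g).det ≠ 0 :=
      MvPolynomial.ne_zero_iff.2 ⟨s, hcoeff.trans_ne hs⟩
    exact ((hI.rank_erase_lt e heI).trans_le hr).not_ge (le_rank_genPartMat hdet)

lemma coeff_support_unique (hI : IsMatching A I) (hr : (genPartMat A I).rank ≤ r)
    {f : Fin r → Fin μ × Fin 2} {g : Fin r → Fin ν × Fin 2} {s t : Fin μ × Fin ν →₀ ℕ}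
    (hs : ((genPartPoly A I).submatrix f g).det.coeff s ≠ 0)
    (ht : ((genPartPoly A I).submatrix f g).det.coeff t ≠ 0) : s = t := by
  have hf : Function.Injective f :=
    row_injective_of_det_submatrix_ne_zero (MvPolynomial.ne_zero_iff.2 ⟨s, hs⟩)
  have hsum {u : Fin μ × Fin ν →₀ ℕ}
      (hu : ((genPartPoly A I).submatrix f g).det.coeff u ≠ 0) (α : Fin μ) :
      ∑ β, u (α, β) = (Finset.univ.filter fun i => (f i).1 = α).card :=
    sum_eq_card_rows_of_coeff_det_variableMatrix_ne_zero hu α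
  ext ⟨α, β⟩
  have hle : ∑ β, s (α, β) ≤ 2 :=
    (hsum hs α).trans_le (card_fiber_fst_le (T := Finset.univ) hf fun _ _ => Finset.mem_univ _)
  exact congrFun (eq_of_sum_eq_of_sum_le_two
    (fun β => (hI.coeff_support_iff hr hs (α, β)).trans (hI.coeff_support_iff hr ht (α, β)).symm)
    ((hsum hs α).trans (hsum ht α).symm) hle) β

lemma rank_canonSubst (hI : IsMatching A I) : (canonSubst A I).rank = (genPartMat A I).rank := by
  refine rank_canonSubst_le.antisymm (rank_le_rank_of_minors _ _ fun f g hfg => ?_)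
  rw [det_submatrix_genPartMat_ne_zero_iff] at hfg
  obtain ⟨s, hs⟩ := MvPolynomial.ne_zero_iff.1 hfg
  have hmonomial : ((genPartPoly A I).submatrix f g).det =
      MvPolynomial.monomial s (((genPartPoly A I).submatrix f g).det.coeff s) := by
    ext t
    rw [MvPolynomial.coeff_monomial]
    split_ifs with hst
    · rw [hst]
    · exact of_not_not fun ht => hst (hI.coeff_support_unique le_rfl hs ht)
  have heval := eval_one_det_variableMatrix (fun i j => ((f i).1, (g j).1))
    ((canonSubst A I).submatrix f g)
  change MvPolynomial.eval 1 ((genPartPoly A I).submatrix f g).det = _ at heval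
  rw [← heval, hmonomial]
  simpa [MvPolynomial.eval_monomial] using hs

lemma rank_canonSubst_erase_lt (hI : IsMatching A I) {e : Fin μ × Fin ν} (he : e ∈ I) :
    (canonSubst A (I.erase e)).rank < (canonSubst A I).rank :=
  hI.rank_canonSubst ▸ rank_canonSubst_le.trans_lt (hI.rank_erase_lt e he)

lemma subsingleton_edges_of_vecMul_eq_zero (hI : IsMatching A I) {x : Fin μ × Fin 2 → F}
    (hx : x ᵥ* canonSubst A I = 0) {α : Fin μ} {i : Fin 2} (hxi : x (α, i) ≠ 0) :
    {β | (α, β) ∈ I}.Subsingleton := by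
  intro β hβ β' hβ'
  by_contra hne
  obtain ⟨f, g, hdet, havoid⟩ :=
    exists_det_submatrix_ne_zero_avoiding _ hI.rank_canonSubst hx hxi
  have hf := row_injective_of_det_submatrix_ne_zero hdet
  obtain ⟨s, hs⟩ := MvPolynomial.ne_zero_iff.1 (det_submatrix_genPartPoly_ne_zero hdet)
  have hrow : ∑ β, s (α, β) ≤ 1 := calc
    ∑ β, s (α, β) = (Finset.univ.filter fun k => (f k).1 = α).card :=
      sum_eq_card_rows_of_coeff_det_variableMatrix_ne_zero hs α
    _ ≤ (Finset.univ.erase i).card := card_fiber_fst_le hf fun k hk =>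
      Finset.mem_erase.2 ⟨fun hki => havoid k (Prod.ext hk hki), Finset.mem_univ _⟩
    _ = 1 := by simp
  have hpair : s (α, β) + s (α, β') ≤ ∑ β, s (α, β) := by
    rw [← Finset.sum_pair (f := fun b => s (α, b)) hne]
    exact Finset.sum_le_sum_of_subset (Finset.subset_univ _)
  have hsβ := (hI.coeff_support_iff le_rfl hs (α, β)).2 hβ
  have hsβ' := (hI.coeff_support_iff le_rfl hs (α, β')).2 hβ'
  omega

end IsMatching

end Matching

section Kernel

variable {F : Type*} [Field F] {μ ν : ℕ} {A : Fin μ → Fin ν → Matrix (Fin 2) (Fin 2) F}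
  {I J : Finset (Fin μ × Fin ν)}

lemma canonSubst_mulVec_apply (y : Fin ν × Fin 2 → F) (α : Fin μ) (i : Fin 2) :
    (canonSubst A J *ᵥ y) (α, i) =
      ∑ β, if (α, β) ∈ J then (A α β *ᵥ fun j => y (β, j)) i else 0 := by
  simp only [mulVec, dotProduct, canonSubst, of_apply, Fintype.sum_prod_type, ite_mul, zero_mul]
  refine Finset.sum_congr rfl fun β _ => ?_
  split_ifs <;> simp

lemma vecMul_canonSubst_apply (x : Fin μ × Fin 2 → F) (β : Fin ν) (j : Fin 2) :
    (x ᵥ* canonSubst A J) (β, j) =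
      ∑ α, if (α, β) ∈ J then ((fun i => x (α, i)) ᵥ* A α β) j else 0 := by
  simp only [vecMul, dotProduct, canonSubst, of_apply, Fintype.sum_prod_type, mul_ite, mul_zero]
  refine Finset.sum_congr rfl fun α _ => ?_
  split_ifs <;> simp

lemma canonSubst_mulVec_erase {α : Fin μ} {β : Fin ν} (h : (α, β) ∈ J) (y : Fin ν × Fin 2 → F) :
    canonSubst A J *ᵥ y = canonSubst A (J.erase (α, β)) *ᵥ y +
      fun p => if p.1 = α then (A α β *ᵥ fun j => y (β, j)) p.2 else 0 := by
  ext ⟨a, i⟩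
  simp only [Pi.add_apply, canonSubst_mulVec_apply]
  split_ifs with ha
  · subst ha
    rw [← Finset.add_sum_erase _ _ (Finset.mem_univ β),
      ← Finset.add_sum_erase _ _ (Finset.mem_univ β), if_pos h,
      if_neg (Finset.notMem_erase _ _), zero_add, add_comm]
    congr 1
    refine Finset.sum_congr rfl fun b hb => ?_
    simp [Finset.ne_of_mem_erase hb]
  · simp [ha]

lemma block_mulVec_eq_zero_of_subsingleton_edges {y : Fin ν × Fin 2 → F}
    (hy : canonSubst A J *ᵥ y = 0) {α : Fin μ} {β : Fin ν} (h : (α, β) ∈ J)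
    (hα : {β | (α, β) ∈ J}.Subsingleton) : (A α β *ᵥ fun j => y (β, j)) = 0 := by
  have hother (b : Fin ν) (hb : b ≠ β) : (α, b) ∉ J := fun hbJ => hb (hα hbJ h)
  funext i
  have hyi := congrFun hy (α, i)
  rwa [canonSubst_mulVec_apply, Fintype.sum_eq_single β fun b hb => if_neg (hother b hb),
    if_pos h] at hyi

lemma exists_ne_vecMul_block_ne_zero {x : Fin μ × Fin 2 → F} (hx : x ᵥ* canonSubst A J = 0)
    {α : Fin μ} {β : Fin ν} (h : (α, β) ∈ J) (hα : (fun i => x (α, i)) ᵥ* A α β ≠ 0) :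
    ∃ α' ≠ α, (α', β) ∈ J ∧ (fun i => x (α', i)) ≠ 0 := by
  by_contra! hother
  refine hα (funext fun j => ?_)
  have hxj := congrFun hx (β, j)
  rwa [vecMul_canonSubst_apply, Fintype.sum_eq_single α fun a ha => ?_, if_pos h] at hxj
  split_ifs with haJ
  · rw [hother a ha haJ, zero_vecMul, Pi.zero_apply]
  · rfl

lemma vecMul_block_dotProduct_eq_zero {x : Fin μ × Fin 2 → F} (hx : x ᵥ* canonSubst A J = 0)
    {α : Fin μ} {β : Fin ν} (h : (α, β) ∈ J) {y : Fin ν × Fin 2 → F}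
    (hy : canonSubst A (J.erase (α, β)) *ᵥ y = 0) :
    ((fun i => x (α, i)) ᵥ* A α β) ⬝ᵥ (fun j => y (β, j)) = 0 := by
  have hxy : x ⬝ᵥ (canonSubst A J *ᵥ y) = 0 := by rw [dotProduct_mulVec, hx, zero_dotProduct]
  rw [canonSubst_mulVec_erase h, hy, zero_add] at hxy
  rw [← dotProduct_mulVec, ← hxy]
  simp [dotProduct, Fintype.sum_prod_type]

namespace IsMatching

lemma exists_canonSubst_erase_mulVec_eq_zero (hI : IsMatching A I) {α : Fin μ} {β : Fin ν}
    (h : (α, β) ∈ I) : ∃ y : Fin ν × Fin 2 → F,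
      canonSubst A (I.erase (α, β)) *ᵥ y = 0 ∧ (A α β *ᵥ fun j => y (β, j)) ≠ 0 := by
  by_contra! hy
  refine (hI.rank_canonSubst_erase_lt h).not_ge (rank_le_rank_of_ker_le _ _ fun y hker => ?_)
  rw [canonSubst_mulVec_erase h, hker, hy y hker]
  simp [Pi.zero_def]

lemma vecMul_block_eq_zero (hI : IsMatching A I) {x : Fin μ × Fin 2 → F}
    (hx : x ᵥ* canonSubst A I = 0) {α : Fin μ} {β : Fin ν} (h : (α, β) ∈ I) :
    (fun i => x (α, i)) ᵥ* A α β = 0 := by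
  by_contra hu
  obtain ⟨α', hne, h', hxα'⟩ := exists_ne_vecMul_block_ne_zero hx h hu
  have hedges {a : Fin μ} (ha : (fun i => x (a, i)) ≠ 0) : {b | (a, b) ∈ I}.Subsingleton := by
    obtain ⟨i, hi⟩ := Function.ne_iff.1 ha
    exact hI.subsingleton_edges_of_vecMul_eq_zero hx hi
  have hα := hedges (a := α) fun h0 => hu (by rw [h0, zero_vecMul])
  obtain ⟨y, hy, hαy⟩ := hI.exists_canonSubst_erase_mulVec_eq_zero h
  obtain ⟨y', hy', hα'y'⟩ := hI.exists_canonSubst_erase_mulVec_eq_zero h'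
  have hα'y : (A α' β *ᵥ fun j => y (β, j)) = 0 :=
    block_mulVec_eq_zero_of_subsingleton_edges hy (by simp [h', hne])
      ((hedges hxα').anti fun _ => Finset.mem_of_mem_erase)
  have hαy' : (A α β *ᵥ fun j => y' (β, j)) = 0 :=
    block_mulVec_eq_zero_of_subsingleton_edges hy' (by simp [h, hne.symm])
      (hα.anti fun _ => Finset.mem_of_mem_erase)
  have hspan : LinearIndependent F ![fun j => y (β, j), fun j => y' (β, j)] := by
    refine LinearIndependent.pair_iff.2 fun a b hab => ⟨?_, ?_⟩
    · have hAab := congrArg (A α β *ᵥ ·) hab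
      simpa only [mulVec_add, mulVec_smul, mulVec_zero, hαy', smul_zero, add_zero, smul_eq_zero,
        hαy, or_false] using hAab
    · have hAab := congrArg (A α' β *ᵥ ·) hab
      simpa only [mulVec_add, mulVec_smul, mulVec_zero, hα'y, smul_zero, zero_add, smul_eq_zero,
        hα'y', or_false] using hAab
  have hy_orth := vecMul_block_dotProduct_eq_zero hx h hy
  have hy'_orth : ((fun i => x (α, i)) ᵥ* A α β) ⬝ᵥ (fun j => y' (β, j)) = 0 := by
    rw [← dotProduct_mulVec, hαy', dotProduct_zero]
  refine hu (eq_zero_of_dotProduct_eq_zero hspan (Fin.forall_fin_two.2 ⟨?_, ?_⟩))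
  exacts [(dotProduct_comm _ _).trans hy_orth, (dotProduct_comm _ _).trans hy'_orth]

lemma vecMul_canonSubst_eq_zero_iff (hI : IsMatching A I) (x : Fin μ × Fin 2 → F) :
    x ᵥ* canonSubst A I = 0 ↔ ∀ α, (∀ β, (α, β) ∈ I → (fun i => x (α, i)) ᵥ* A α β = 0) ∧
      ((fun i => x (α, i)) ≠ 0 → {β | (α, β) ∈ I}.Subsingleton) := by
  constructor
  · refine fun hx α => ⟨fun β => hI.vecMul_block_eq_zero hx, fun hα => ?_⟩
    obtain ⟨i, hi⟩ := Function.ne_iff.1 hα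
    exact hI.subsingleton_edges_of_vecMul_eq_zero hx hi
  · intro h
    funext ⟨β, j⟩
    rw [vecMul_canonSubst_apply]
    refine Finset.sum_eq_zero fun α _ => ?_
    split_ifs with hαβ
    · rw [(h α).1 β hαβ, Pi.zero_apply]
    · rfl

end IsMatching

end Kernel

section BlockKernel

variable {F : Type*} [Field F] {μ ν : ℕ} {A : Fin μ → Fin ν → Matrix (Fin 2) (Fin 2) F}
  {I : Finset (Fin μ × Fin ν)}

lemma eq_zero_of_vecMul_eq_zero_of_rank_ne_one {M : Matrix (Fin 2) (Fin 2) F} (hM : M ≠ 0)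
    (hrank : M.rank ≠ 1) {v : Fin 2 → F} (hv : v ᵥ* M = 0) : v = 0 := by
  have hrank_ne_zero : M.rank ≠ 0 := fun h => hM (eq_zero_of_rank_eq_zero h)
  have hrank_le : M.rank ≤ 2 := M.rank_le_width
  have hrank_eq : M.rank = Fintype.card (Fin 2) := by rw [Fintype.card_fin]; omega
  have hinj := vecMul_injective_iff.2 ((linearIndependent_row_iff_rank_eq_card M).2 hrank_eq)
  exact hinj (hv.trans (zero_vecMul M).symm)

lemma filter_fst_eq_singleton_iff {V W : Type*} [DecidableEq V] {S : Finset (V × W)} {v : V}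
    {w : W} :
    (S.filter fun e => e.1 = v) = {(v, w)} ↔ (v, w) ∈ S ∧ {w | (v, w) ∈ S}.Subsingleton := by
  simp only [Finset.eq_singleton_iff_unique_mem, Finset.mem_filter, and_true]
  refine and_congr_right fun hw => ⟨fun h a ha b hb => ?_, ?_⟩
  · exact congrArg Prod.snd ((h (v, a) ⟨ha, rfl⟩).trans (h (v, b) ⟨hb, rfl⟩).symm)
  · rintro h ⟨_, b⟩ ⟨hb, rfl⟩
    exact congrArg _ (h hb hw)

lemma mem_kerIL_iff (hA : ∀ e ∈ I, A e.1 e.2 ≠ 0) (α : Fin μ) (v : Fin 2 → F) :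
    v ∈ kerIL A I α ↔ (∀ β, (α, β) ∈ I → v ᵥ* A α β = 0) ∧
      (v ≠ 0 → {β | (α, β) ∈ I}.Subsingleton) := by
  unfold kerIL
  split_ifs with hdeg hedge
  · have hnone (β : Fin ν) : (α, β) ∉ I := fun h =>
      Finset.filter_eq_empty_iff.1 (Finset.card_eq_zero.1 hdeg) h rfl
    simp [hnone]
  · obtain ⟨hfilter, -⟩ := hedge.choose_spec
    obtain ⟨hmem, hsub⟩ := filter_fst_eq_singleton_iff.1 hfilter
    rw [LinearMap.mem_ker, vecMulLinear_apply]
    exact ⟨fun hv => ⟨fun β hβ => hsub hmem hβ ▸ hv, fun _ => hsub⟩, fun hv => hv.1 _ hmem⟩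
  · rw [Submodule.mem_bot]
    refine ⟨fun hv => by simp [hv], fun ⟨hker, hsub⟩ => of_not_not fun hv => ?_⟩
    obtain ⟨⟨α, β⟩, he⟩ := Finset.card_ne_zero.1 hdeg
    obtain ⟨hβ, rfl⟩ := Finset.mem_filter.1 he
    have hrank : (A α β).rank ≠ 1 := fun h =>
      hedge ⟨β, filter_fst_eq_singleton_iff.2 ⟨hβ, hsub hv⟩, h⟩
    exact hv (eq_zero_of_vecMul_eq_zero_of_rank_ne_one (hA _ hβ) hrank (hker β hβ))

lemma IsMatching.mem_ker_vecMulLinear_iff (hI : IsMatching A I) (x : Fin μ × Fin 2 → F) :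
    x ∈ LinearMap.ker (canonSubst A I).vecMulLinear ↔
      ∀ α, (fun i => x (α, i)) ∈ kerIL A I α := by
  simp only [mem_kerIL_iff hI.block_ne_zero]
  exact hI.vecMul_canonSubst_eq_zero_iff x

end BlockKernel

section Transpose

variable {F : Type*} [Field F] {μ ν : ℕ}

/-- The blocks of `Aᵀ` when those of `A` are `A α β`. -/
def transposeBlocks (A : Fin μ → Fin ν → Matrix (Fin 2) (Fin 2) F) :
    Fin ν → Fin μ → Matrix (Fin 2) (Fin 2) F :=
  fun β α => (A α β)ᵀ

/-- The edges of `I` with the two sides exchanged, so that they index `transposeBlocks A`. -/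
def swapEdges (I : Finset (Fin μ × Fin ν)) : Finset (Fin ν × Fin μ) :=
  I.map (Equiv.prodComm _ _).toEmbedding

variable {A : Fin μ → Fin ν → Matrix (Fin 2) (Fin 2) F} {I : Finset (Fin μ × Fin ν)}

lemma mem_swapEdges {e : Fin ν × Fin μ} : e ∈ swapEdges I ↔ e.swap ∈ I := by
  simp [swapEdges, Finset.mem_map_equiv]

lemma canonSubst_transposeBlocks (A : Fin μ → Fin ν → Matrix (Fin 2) (Fin 2) F)
    (I : Finset (Fin μ × Fin ν)) :
    canonSubst (transposeBlocks A) (swapEdges I) = (canonSubst A I)ᵀ := by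
  ext p q
  simp [canonSubst, transposeBlocks, mem_swapEdges]

lemma rank_genPartMat_transposeBlocks (A : Fin μ → Fin ν → Matrix (Fin 2) (Fin 2) F)
    (I : Finset (Fin μ × Fin ν)) :
    (genPartMat (transposeBlocks A) (swapEdges I)).rank = (genPartMat A I).rank := by
  let φ : FractionRing (MvPolynomial (Fin μ × Fin ν) F) ≃+*
      FractionRing (MvPolynomial (Fin ν × Fin μ) F) :=
    IsFractionRing.ringEquivOfRingEquiv
      (MvPolynomial.renameEquiv F (Equiv.prodComm (Fin μ) (Fin ν))).toRingEquiv
  have hmap : genPartMat (transposeBlocks A) (swapEdges I) = ((genPartMat A I).map φ)ᵀ := by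
    ext p q
    by_cases h : (q.1, p.1) ∈ I <;>
      simp [genPartMat, transposeBlocks, mem_swapEdges, h, φ]
  have hrank : ((genPartMat A I).map φ).rank = (genPartMat A I).rank :=
    rank_map_ringHom φ.toRingHom _
  rw [hmap, rank_transpose, hrank]

lemma IsMatching.transpose (hI : IsMatching A I) :
    IsMatching (transposeBlocks A) (swapEdges I) where
  block_ne_zero e he h :=
    hI.block_ne_zero e.swap (mem_swapEdges.1 he) (transpose_eq_zero.1 h)
  rank_erase_lt e he := by
    have herase : (swapEdges I).erase e = swapEdges (I.erase e.swap) := by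
      ext
      simp [mem_swapEdges]
    rw [herase, rank_genPartMat_transposeBlocks, rank_genPartMat_transposeBlocks]
    exact hI.rank_erase_lt _ (mem_swapEdges.1 he)

lemma filter_fst_swapEdges (β : Fin ν) :
    (swapEdges I).filter (fun e => e.1 = β) = swapEdges (I.filter fun e => e.2 = β) := by
  ext
  simp [mem_swapEdges]

lemma kerIL_transposeBlocks (A : Fin μ → Fin ν → Matrix (Fin 2) (Fin 2) F)
    (I : Finset (Fin μ × Fin ν)) (β : Fin ν) :
    kerIL (transposeBlocks A) (swapEdges I) β = kerIR A I β := by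
  have hcard : ((swapEdges I).filter fun e => e.1 = β).card = (I.filter fun e => e.2 = β).card := by
    rw [filter_fst_swapEdges]
    exact Finset.card_map _
  have hsingleton (α : Fin μ) : (swapEdges I).filter (fun e => e.1 = β) = {(β, α)} ↔
      I.filter (fun e => e.2 = β) = {(α, β)} := by
    rw [filter_fst_swapEdges]
    exact Finset.map_inj (s₂ := {(α, β)})
  unfold kerIL kerIR
  simp only [hcard, hsingleton, transposeBlocks, rank_transpose, vecMulLinear_transpose]

end Transpose

/-- For a matching `I` of a `(2×2)`-type generic partitioned matrix, the left kernel of the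
canonical substitution `Ã_I` equals `⊕_α ker_I(α)` and its right kernel equals
`⊕_β ker_I(β)`. -/
theorem canonSubst_kernels {F : Type*} [Field F] {μ ν : ℕ}
    (A : Fin μ → Fin ν → Matrix (Fin 2) (Fin 2) F) (I : Finset (Fin μ × Fin ν))
    (hIE : ∀ e ∈ I, A e.1 e.2 ≠ 0)
    (hmatch : ∀ e ∈ I, (genPartMat A (I.erase e)).rank < (genPartMat A I).rank) :
    (∀ x : Fin μ × Fin 2 → F,
      x ∈ LinearMap.ker (canonSubst A I).vecMulLinear ↔
        ∀ α, (fun i => x (α, i)) ∈ kerIL A I α) ∧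
    (∀ y : Fin ν × Fin 2 → F,
      y ∈ LinearMap.ker (canonSubst A I).mulVecLin ↔
        ∀ β, (fun j => y (β, j)) ∈ kerIR A I β) := by
  have hI : IsMatching A I := ⟨hIE, hmatch⟩
  refine ⟨hI.mem_ker_vecMulLinear_iff, fun y => ?_⟩
  have htranspose := hI.transpose.mem_ker_vecMulLinear_iff y
  simpa only [canonSubst_transposeBlocks, vecMulLinear_transpose, kerIL_transposeBlocks]
    using htranspose
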